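/- In the deconvolution setting with data f = K*g and κ ≤ l_min/6: let u_2 ∈ PC[0,1] and assume 6·h_max·κ ≤ (1/2)·h_min·(l_min − 2κ) − γ and 2·κ·h_max ≤ γ. Then there exists u_3 ∈ PC[0,1] which has no jump in ∪_i N_i and exactly one jump in each interval J_i, i = 1,...,n, and which satisfies P_γ(u_3) ≤ P_γ(u_2). -/

import Mathlib

open MeasureTheory Filter Set
open scoped ENNReal Classical

noncomputable section

/-- The Lebesgue measure restricted to `[0,1]`. -/
def mu01 : Measure ℝ := volume.restrict (Set.Icc (0:ℝ) 1)

/-- The step function determined by partition points `x` and values `a`. -/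
def stepF {m : ℕ} (x : Fin (m + 1) → ℝ) (a : Fin m → ℝ) : ℝ → ℝ := fun t =>
  ∑ l : Fin m, Set.indicator (Set.Ioo (x l.castSucc) (x l.succ)) (fun _ => a l) t

/-- `u` is a.e. on `[0,1]` represented by the step function with partition `x` and values `a`. -/
def IsPCRep (u : ℝ → ℝ) {m : ℕ} (x : Fin (m + 1) → ℝ) (a : Fin m → ℝ) : Prop :=
  StrictMono x ∧ x 0 = 0 ∧ x (Fin.last m) = 1 ∧ ∀ᵐ t ∂mu01, u t = stepF x a t

/-- `u` is piecewise constant on `[0,1]` (up to a.e. equality). -/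
def IsPC (u : ℝ → ℝ) : Prop :=
  ∃ (m : ℕ) (x : Fin (m + 1) → ℝ) (a : Fin m → ℝ), IsPCRep u x a

/-- The number of jumps `J(u)`: the minimal number of interior partition points over all
piecewise constant representations of `u`. -/
def jumps (u : ℝ → ℝ) : ℕ :=
  sInf {jj : ℕ | ∃ (x : Fin (jj + 2) → ℝ) (a : Fin (jj + 1) → ℝ), IsPCRep u x a}

/-- `u` is piecewise constant with all jump locations inside `S`. -/
def IsPCIn (u : ℝ → ℝ) (S : Set ℝ) : Prop :=
  ∃ (m : ℕ) (x : Fin (m + 1) → ℝ) (a : Fin m → ℝ), IsPCRep u x a ∧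
    ∀ i : Fin (m + 1), i ≠ 0 → i ≠ Fin.last m → x i ∈ S

/-- The `L¹[0,1]` distance of two functions. -/
def L1dist (u v : ℝ → ℝ) : ℝ := ∫ t, |u t - v t| ∂mu01

/-- The continuous `L¹`-Potts functional `P_γ` with data `f`. -/
def Potts (γ : ℝ) (f u : ℝ → ℝ) : ℝ≥0∞ :=
  if IsPC u then ENNReal.ofReal (γ * (jumps u : ℝ) + L1dist u f) else ⊤

/-- The (semi-)discrete `L¹`-Potts functional with data `f`, restricted to piecewise
constant functions whose jumps lie in `S`. -/
def PottsIn (γ : ℝ) (f : ℝ → ℝ) (S : Set ℝ) (u : ℝ → ℝ) : ℝ≥0∞ :=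
  if IsPCIn u S then ENNReal.ofReal (γ * (jumps u : ℝ) + L1dist u f) else ⊤

/-- Convolution `(K*g)(t) = ∫ K(s)·g(t−s) ds`. -/
def convK (K g : ℝ → ℝ) : ℝ → ℝ := fun t => ∫ s, K s * g (t - s)

/-- The piecewise constant function on `ℝ` with jump locations `j` and values `α`
(extended constantly outside the jump region): at `t`, its value is `α i` where `i`
is the number of jump locations strictly below `t`. -/
def stepOn {n : ℕ} (j : Fin n → ℝ) (α : Fin (n + 1) → ℝ) : ℝ → ℝ := fun t =>
  α ⟨(Finset.univ.filter fun i => j i < t).card,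
      Nat.lt_succ_of_le ((Finset.card_filter_le _ _).trans (by simp))⟩

/-- The jump locations together with the endpoints `0` and `1`. -/
def jext {n : ℕ} (j : Fin (n + 1) → ℝ) : Fin (n + 3) → ℝ :=
  Fin.cons (0 : ℝ) (Fin.snoc j (1 : ℝ))

/-- The minimal length `l_min` of the intervals of constancy (inside `[0,1]`). -/
def lmin {n : ℕ} (j : Fin (n + 1) → ℝ) : ℝ :=
  Finset.univ.inf' Finset.univ_nonempty
    fun i : Fin (n + 2) => jext j i.succ - jext j i.castSucc

/-- The minimal jump height `h_min`. -/
def hjumpMin {n : ℕ} (α : Fin (n + 2) → ℝ) : ℝ :=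
  Finset.univ.inf' Finset.univ_nonempty fun i : Fin (n + 1) => |α i.succ - α i.castSucc|

/-- The maximal jump height `h_max`. -/
def hjumpMax {n : ℕ} (α : Fin (n + 2) → ℝ) : ℝ :=
  Finset.univ.sup' Finset.univ_nonempty fun i : Fin (n + 1) => |α i.succ - α i.castSucc|

/-- The (real-valued) `L¹`-Potts value `γ·J(u) + ‖u − f‖₁` for piecewise constant `u`. -/
def PottsVal (γ : ℝ) (f u : ℝ → ℝ) : ℝ := γ * (jumps u : ℝ) + L1dist u f

/-- Near the jump `p` from `A` to `B` of `g`, the datum `f` agrees with `g` at distance more than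
`κ` from `p`, and closer to `p` the value of `g` is the one of `A`, `B` nearest to `f`. -/
structure IsTransition (f g : ℝ → ℝ) (p κ r A B : ℝ) : Prop where
  pos : 0 < κ
  three_mul_le : 3 * κ ≤ r
  left : ∀ t ∈ Ioo (p - r) (p - κ), f t = A ∧ g t = A
  right : ∀ t ∈ Ioo (p + κ) (p + r), f t = B ∧ g t = B
  near_left : ∀ t ∈ Ioo (p - κ) (p + κ), |g t - f t| ≤ |f t - A|
  near_right : ∀ t ∈ Ioo (p - κ) (p + κ), |g t - f t| ≤ |f t - B|
  near_half : ∀ t ∈ Ioo (p - κ) (p + κ), |g t - f t| ≤ |B - A| / 2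
  int_f : IntegrableOn f (Icc (p - r) (p + r))
  int_g : IntegrableOn g (Icc (p - r) (p + r))

lemma intervalIntegrable_abs_sub {u v : ℝ → ℝ} {a b c d : ℝ} (hu : IntegrableOn u (Icc a b))
    (hv : IntegrableOn v (Icc a b)) (hac : a ≤ c) (hcd : c ≤ d) (hdb : d ≤ b) :
    IntervalIntegrable (fun t => |u t - v t|) volume c d :=
  (intervalIntegrable_iff_integrableOn_Icc_of_le hcd).2
    (IntegrableOn.mono_set (Integrable.abs (hu.sub hv)) (Icc_subset_Icc hac hdb))

lemma mul_le_integral_of_le_Ioo {F : ℝ → ℝ} {a b C : ℝ} (hab : a ≤ b)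
    (hF : IntervalIntegrable F volume a b) (h : ∀ t ∈ Ioo a b, C ≤ F t) :
    (b - a) * C ≤ ∫ t in a..b, F t := by
  have := intervalIntegral.integral_mono_on_of_le_Ioo hab (intervalIntegrable_const (c := C)) hF h
  simpa using this

lemma integral_le_mul_of_le_Ioo {F : ℝ → ℝ} {a b C : ℝ} (hab : a ≤ b)
    (hF : IntervalIntegrable F volume a b) (h : ∀ t ∈ Ioo a b, F t ≤ C) :
    ∫ t in a..b, F t ≤ (b - a) * C := by
  have := intervalIntegral.integral_mono_on_of_le_Ioo hab hF (intervalIntegrable_const (c := C)) h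
  simpa using this

/-- If `v` is the constant `c` on `(a, b)` and on an interval `(s, s')` at least as long where
`f = A`, then replacing `c` by `A` does not increase the total distance to `f`. -/
lemma integral_le_of_flat {f g v : ℝ → ℝ} {a b s s' c A : ℝ} (hab : a ≤ b) (hs : s ≤ s')
    (hlen : b - a ≤ s' - s)
    (hfs : ∀ t ∈ Ioo s s', f t = A) (hvs : ∀ t ∈ Ioo s s', v t = c)
    (hvt : ∀ t ∈ Ioo a b, v t = c) (hg : ∀ t ∈ Ioo a b, |g t - f t| ≤ |f t - A|)
    (ig : IntervalIntegrable (fun t => |g t - f t|) volume a b)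
    (iv : IntervalIntegrable (fun t => |v t - f t|) volume a b)
    (ivs : IntervalIntegrable (fun t => |v t - f t|) volume s s') :
    ∫ t in a..b, |g t - f t| ≤ (∫ t in s..s', |v t - f t|) + ∫ t in a..b, |v t - f t| := by
  have h1 : (s' - s) * |c - A| ≤ ∫ t in s..s', |v t - f t| :=
    mul_le_integral_of_le_Ioo hs ivs fun t ht => by rw [hfs t ht, hvs t ht]
  have h2 : ∫ t in a..b, (|g t - f t| - |c - A|) ≤ ∫ t in a..b, |v t - f t| := by
    refine intervalIntegral.integral_mono_on_of_le_Ioo hab (ig.sub intervalIntegrable_const) iv ?_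
    intro t ht
    have := abs_sub_le (f t) c A
    rw [hvt t ht, abs_sub_comm c (f t)]
    linarith [hg t ht]
  rw [intervalIntegral.integral_sub ig intervalIntegrable_const] at h2
  simp only [intervalIntegral.integral_const, smul_eq_mul] at h2
  nlinarith [abs_nonneg (c - A)]

namespace IsTransition

variable {f g v : ℝ → ℝ} {p κ r A B : ℝ}

lemma integral_split (h : IsTransition f g p κ r A B)
    (hv : IntegrableOn v (Icc (p - r) (p + r))) :
    ∫ t in (p - r)..(p + r), |v t - f t| =
      (∫ t in (p - r)..(p - κ), |v t - f t|) + (∫ t in (p - κ)..(p + κ), |v t - f t|)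
        + ∫ t in (p + κ)..(p + r), |v t - f t| := by
  have h0 := h.pos
  have h3 := h.three_mul_le
  rw [intervalIntegral.integral_add_adjacent_intervals,
    intervalIntegral.integral_add_adjacent_intervals] <;>
  exact intervalIntegrable_abs_sub hv h.int_f (by linarith) (by linarith) (by linarith)

lemma integral_self_le (h : IsTransition f g p κ r A B) :
    ∫ t in (p - r)..(p + r), |g t - f t| ≤ ∫ t in (p - κ)..(p + κ), |g t - f t| := by
  have h0 := h.pos
  have h3 := h.three_mul_le
  have h1 : ∫ t in (p - r)..(p - κ), |g t - f t| ≤ ((p - κ) - (p - r)) * 0 :=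
    integral_le_mul_of_le_Ioo (by linarith)
      (intervalIntegrable_abs_sub h.int_g h.int_f (by linarith) (by linarith) (by linarith))
      fun t ht => by simp [(h.left t ht).1, (h.left t ht).2]
  have h2 : ∫ t in (p + κ)..(p + r), |g t - f t| ≤ ((p + r) - (p + κ)) * 0 :=
    integral_le_mul_of_le_Ioo (by linarith)
      (intervalIntegrable_abs_sub h.int_g h.int_f (by linarith) (by linarith) (by linarith))
      fun t ht => by simp [(h.right t ht).1, (h.right t ht).2]
  rw [h.integral_split h.int_g]
  linarith

lemma integral_self_le_mul (h : IsTransition f g p κ r A B) :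
    ∫ t in (p - r)..(p + r), |g t - f t| ≤ κ * |B - A| := by
  have h0 := h.pos
  have h3 := h.three_mul_le
  have h1 : ∫ t in (p - κ)..(p + κ), |g t - f t| ≤ ((p + κ) - (p - κ)) * (|B - A| / 2) :=
    integral_le_mul_of_le_Ioo (by linarith)
      (intervalIntegrable_abs_sub h.int_g h.int_f (by linarith) (by linarith) (by linarith))
      h.near_half
  linarith [h.integral_self_le]

lemma le_integral_of_const (h : IsTransition f g p κ r A B) {c : ℝ}
    (hv : IntegrableOn v (Icc (p - r) (p + r))) (hc : ∀ t ∈ Ioo (p - r) (p + r), v t = c) :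
    (r - κ) * |B - A| ≤ ∫ t in (p - r)..(p + r), |v t - f t| := by
  have h0 := h.pos
  have h3 := h.three_mul_le
  have h1 : ((p - κ) - (p - r)) * |c - A| ≤ ∫ t in (p - r)..(p - κ), |v t - f t| :=
    mul_le_integral_of_le_Ioo (by linarith)
      (intervalIntegrable_abs_sub hv h.int_f (by linarith) (by linarith) (by linarith))
      fun t ht => by rw [(h.left t ht).1, hc t ⟨ht.1, by linarith [ht.2]⟩]
  have h2 : ((p + r) - (p + κ)) * |c - B| ≤ ∫ t in (p + κ)..(p + r), |v t - f t| :=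
    mul_le_integral_of_le_Ioo (by linarith)
      (intervalIntegrable_abs_sub hv h.int_f (by linarith) (by linarith) (by linarith))
      fun t ht => by rw [(h.right t ht).1, hc t ⟨by linarith [ht.1], ht.2⟩]
  have h4 : 0 ≤ ∫ t in (p - κ)..(p + κ), |v t - f t| :=
    intervalIntegral.integral_nonneg (by linarith) fun t _ => abs_nonneg _
  have h5 : |B - A| ≤ |c - A| + |c - B| := by
    rw [abs_sub_comm c B]; linarith [abs_sub_le B c A]
  rw [h.integral_split hv]
  nlinarith

lemma integral_self_le_of_one_jump (h : IsTransition f g p κ r A B) {y c d : ℝ}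
    (hv : IntegrableOn v (Icc (p - r) (p + r)))
    (hc : ∀ t ∈ Ioo (p - r) y, v t = c) (hd : ∀ t ∈ Ioo y (p + r), v t = d) :
    ∫ t in (p - r)..(p + r), |g t - f t| ≤ ∫ t in (p - r)..(p + r), |v t - f t| := by
  have h0 := h.pos
  have h3 := h.three_mul_le
  refine h.integral_self_le.trans ?_
  rw [h.integral_split hv]
  have nonneg_left : 0 ≤ ∫ t in (p - r)..(p - κ), |v t - f t| :=
    intervalIntegral.integral_nonneg (by linarith) fun t _ => abs_nonneg _
  have nonneg_right : 0 ≤ ∫ t in (p + κ)..(p + r), |v t - f t| :=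
    intervalIntegral.integral_nonneg (by linarith) fun t _ => abs_nonneg _
  have left_part : ∀ q, p - κ ≤ q → q ≤ p + κ → q ≤ y → ∫ t in (p - κ)..q, |g t - f t| ≤
      (∫ t in (p - r)..(p - κ), |v t - f t|) + ∫ t in (p - κ)..q, |v t - f t| := by
    intro q hq1 hq2 hqy
    refine integral_le_of_flat (c := c) (A := A) hq1 (by linarith) (by linarith)
      (fun t ht => (h.left t ht).1) (fun t ht => hc t ⟨ht.1, by linarith [ht.2]⟩)
      (fun t ht => hc t ⟨by linarith [ht.1], by linarith [ht.2]⟩)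
      (fun t ht => h.near_left t ⟨ht.1, by linarith [ht.2]⟩) ?_ ?_ ?_ <;>
    apply intervalIntegrable_abs_sub (a := p - r) (b := p + r) _ h.int_f <;>
    first | linarith | exact hv | exact h.int_g
  have right_part : ∀ q, p - κ ≤ q → q ≤ p + κ → y ≤ q → ∫ t in q..(p + κ), |g t - f t| ≤
      (∫ t in (p + κ)..(p + r), |v t - f t|) + ∫ t in q..(p + κ), |v t - f t| := by
    intro q hq1 hq2 hqy
    refine integral_le_of_flat (c := d) (A := B) hq2 (by linarith) (by linarith)
      (fun t ht => (h.right t ht).1) (fun t ht => hd t ⟨by linarith [ht.1], ht.2⟩)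
      (fun t ht => hd t ⟨by linarith [ht.1], by linarith [ht.2]⟩)
      (fun t ht => h.near_right t ⟨by linarith [ht.1], ht.2⟩) ?_ ?_ ?_ <;>
    apply intervalIntegrable_abs_sub (a := p - r) (b := p + r) _ h.int_f <;>
    first | linarith | exact hv | exact h.int_g
  rcases le_total y (p - κ) with hy | hy
  · linarith [right_part (p - κ) le_rfl (by linarith) hy]
  rcases le_total (p + κ) y with hy' | hy'
  · linarith [left_part (p + κ) (by linarith) le_rfl hy']
  have e1 : ∫ t in (p - κ)..(p + κ), |g t - f t| =
      (∫ t in (p - κ)..y, |g t - f t|) + ∫ t in y..(p + κ), |g t - f t| := by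
    rw [intervalIntegral.integral_add_adjacent_intervals] <;>
    exact intervalIntegrable_abs_sub h.int_g h.int_f (by linarith) (by linarith) (by linarith)
  have e2 : ∫ t in (p - κ)..(p + κ), |v t - f t| =
      (∫ t in (p - κ)..y, |v t - f t|) + ∫ t in y..(p + κ), |v t - f t| := by
    rw [intervalIntegral.integral_add_adjacent_intervals] <;>
    exact intervalIntegrable_abs_sub hv h.int_f (by linarith) (by linarith) (by linarith)
  linarith [left_part y hy hy' le_rfl, right_part y hy hy' le_rfl]

end IsTransition

section StepFunctions

variable {m : ℕ} {x : Fin (m + 1) → ℝ} {a : Fin m → ℝ}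

lemma exists_mem_Ico_castSucc_succ {t : ℝ} (h0 : x 0 ≤ t) (h1 : t < x (Fin.last m)) :
    ∃ l : Fin m, x l.castSucc ≤ t ∧ t < x l.succ := by
  by_contra! hcon
  have : ∀ i : Fin (m + 1), x i ≤ t := by
    intro i
    induction i using Fin.induction with
    | zero => exact h0
    | succ i ih => exact hcon i ih
  exact absurd (this (Fin.last m)) (not_le.2 h1)

lemma stepF_eq_of_mem (hx : StrictMono x) {l : Fin m} {t : ℝ}
    (ht : t ∈ Ioo (x l.castSucc) (x l.succ)) : stepF x a t = a l := by
  unfold stepF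
  rw [Finset.sum_eq_single l]
  · simp [indicator_of_mem ht]
  · intro b _ hb
    apply indicator_of_notMem
    rintro ⟨h1, h2⟩
    rcases lt_or_gt_of_ne hb with h | h
    · have : x b.succ ≤ x l.castSucc := hx.monotone (Fin.succ_le_castSucc_iff.2 h)
      linarith [ht.1]
    · have : x l.succ ≤ x b.castSucc := hx.monotone (Fin.succ_le_castSucc_iff.2 h)
      linarith [ht.2]
  · simp

lemma exists_stepF_eq_const (hx : StrictMono x) {p q : ℝ} (h0 : x 0 ≤ p)
    (h1 : p < x (Fin.last m)) (hno : ∀ l, x l ∉ Ioo p q) :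
    ∃ c, ∀ t ∈ Ioo p q, stepF x a t = c := by
  obtain ⟨l, hl1, hl2⟩ := exists_mem_Ico_castSucc_succ h0 h1
  have hq : q ≤ x l.succ := by
    by_contra! hlt
    exact hno _ ⟨hl2, hlt⟩
  exact ⟨a l, fun t ht => stepF_eq_of_mem hx ⟨hl1.trans_lt ht.1, ht.2.trans_le hq⟩⟩

lemma integrable_stepF : Integrable (stepF x a) := by
  unfold stepF
  refine integrable_finsetSum _ fun l _ => ?_
  exact (integrable_indicator_iff measurableSet_Ioo).2 (integrableOn_const (by simp))

end StepFunctions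

section StepOn

variable {n : ℕ} {j : Fin n → ℝ} {α : Fin (n + 1) → ℝ}

lemma lt_card_filter_iff (hj : StrictMono j) (t : ℝ) (i : Fin n) :
    i.val < (Finset.univ.filter fun i => j i < t).card ↔ j i < t := by
  constructor
  · intro h
    by_contra hlt
    have : (Finset.univ.filter fun i => j i < t) ⊆ Finset.Iio i := by
      intro k hk
      simp only [Finset.mem_filter, Finset.mem_univ, true_and] at hk
      exact Finset.mem_Iio.2 (hj.lt_iff_lt.1 (by linarith))
    have := Finset.card_le_card this
    rw [Fin.card_Iio] at this
    omega
  · intro h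
    have : Finset.Iic i ⊆ (Finset.univ.filter fun i => j i < t) := by
      intro k hk
      simp only [Finset.mem_filter, Finset.mem_univ, true_and]
      exact (hj.monotone (Finset.mem_Iic.1 hk)).trans_lt h
    have := Finset.card_le_card this
    rw [Fin.card_Iic] at this
    omega

lemma stepOn_eq_of_iff (hj : StrictMono j) {t : ℝ} {k : Fin (n + 1)}
    (hk : ∀ i : Fin n, j i < t ↔ i.val < k.val) : stepOn j α t = α k := by
  unfold stepOn
  congr 1
  ext
  have hle : (Finset.univ.filter fun i => j i < t).card ≤ n :=
    (Finset.card_filter_le _ _).trans (by simp)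
  have hk' := k.isLt
  rcases lt_trichotomy (Finset.univ.filter fun i => j i < t).card k.val with h | h | h
  · have h1 := lt_card_filter_iff hj t ⟨_, h.trans_le (Nat.lt_succ_iff.1 hk')⟩
    rw [hk] at h1
    exact absurd (h1.2 h) (lt_irrefl _)
  · exact h
  · have h1 := lt_card_filter_iff hj t ⟨k.val, by omega⟩
    rw [hk] at h1
    exact absurd (h1.1 h) (lt_irrefl _)

lemma sum_telescope (α : Fin (n + 1) → ℝ) (k : Fin (n + 1)) :
    ∑ i : Fin n, (α i.succ - α i.castSucc) * (if i.val < k.val then 1 else 0) = α k - α 0 := by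
  induction k using Fin.induction with
  | zero => simp
  | succ k ih =>
    have : ∀ i : Fin n, (α i.succ - α i.castSucc) * (if i.val < k.succ.val then (1 : ℝ) else 0) =
        (α i.succ - α i.castSucc) * (if i.val < k.castSucc.val then 1 else 0) +
          if i = k then α i.succ - α i.castSucc else 0 := by
      intro i
      rcases lt_trichotomy i k with h | h | h
      · have h' : i.val < k.val := h
        simp [h.ne, h', Nat.lt_succ_of_lt h']
      · simp [h]
      · have h' : k.val < i.val := h
        simp [h.ne', not_lt.2 h'.le, not_le.2 h']
    simp_rw [this]
    rw [Finset.sum_add_distrib, ih]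
    simp

/-- The indicator function of the positive half-line. -/
def heaviside (t : ℝ) : ℝ := if 0 < t then 1 else 0

lemma stepOn_eq_sum (hj : StrictMono j) (t : ℝ) :
    stepOn j α t = α 0 + ∑ i : Fin n, (α i.succ - α i.castSucc) * heaviside (t - j i) := by
  have h := sum_telescope α ⟨(Finset.univ.filter fun i => j i < t).card,
      Nat.lt_succ_of_le ((Finset.card_filter_le _ _).trans (by simp))⟩
  simp only [lt_card_filter_iff hj] at h
  simp only [heaviside, sub_pos, h, stepOn]
  ring

end StepOn

section Convolution

variable {K : ℝ → ℝ} {κ : ℝ}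

lemma measurable_heaviside : Measurable heaviside :=
  Measurable.ite measurableSet_Ioi measurable_const measurable_const

lemma heaviside_nonneg (t : ℝ) : 0 ≤ heaviside t := by
  unfold heaviside; split_ifs <;> norm_num

lemma heaviside_le_one (t : ℝ) : heaviside t ≤ 1 := by
  unfold heaviside; split_ifs <;> norm_num

lemma heaviside_mono : Monotone heaviside := by
  intro s t hst
  unfold heaviside
  split_ifs <;> linarith

lemma integrable_mul_heaviside (hKint : Integrable K) (t : ℝ) :
    Integrable fun s => K s * heaviside (t - s) := by
  refine hKint.mul_bdd (c := 1) ?_ (ae_of_all _ fun s => ?_)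
  · exact (measurable_heaviside.comp (measurable_const.sub measurable_id)).aestronglyMeasurable
  · rw [Real.norm_eq_abs, abs_of_nonneg (heaviside_nonneg _)]
    exact heaviside_le_one _

lemma convK_heaviside_mono (hKint : Integrable K) (hKpos : ∀ x, 0 ≤ K x) :
    Monotone (convK K heaviside) := fun s t hst =>
  integral_mono (integrable_mul_heaviside hKint s) (integrable_mul_heaviside hKint t) fun z =>
    mul_le_mul_of_nonneg_left (heaviside_mono (by linarith)) (hKpos z)

lemma convK_heaviside_nonneg (hKpos : ∀ x, 0 ≤ K x) (t : ℝ) : 0 ≤ convK K heaviside t :=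
  integral_nonneg fun s => mul_nonneg (hKpos s) (heaviside_nonneg _)

lemma convK_heaviside_le_one (hKint : Integrable K) (hKpos : ∀ x, 0 ≤ K x)
    (hKnorm : (∫ x, K x) = 1) (t : ℝ) : convK K heaviside t ≤ 1 := by
  rw [← hKnorm]
  exact integral_mono (integrable_mul_heaviside hKint t) hKint fun s =>
    mul_le_of_le_one_right (hKpos s) (heaviside_le_one _)

lemma convK_heaviside_add_neg (hKint : Integrable K) (hKsym : ∀ x, K (-x) = K x)
    (hKnorm : (∫ x, K x) = 1) (t : ℝ) :
    convK K heaviside t + convK K heaviside (-t) = 1 := by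
  have h1 : convK K heaviside (-t) = ∫ s, K s * heaviside (s - t) := by
    unfold convK
    rw [← integral_neg_eq_self]
    refine integral_congr_ae (ae_of_all _ fun s => ?_)
    simp only [hKsym]
    ring_nf
  have h2 : Integrable fun s => K s * heaviside (s - t) := by
    have h := (integrable_mul_heaviside hKint (-t)).comp_neg
    simp only [hKsym] at h
    convert h using 4
    ring
  rw [h1]
  unfold convK
  rw [← integral_add (integrable_mul_heaviside hKint t) h2, ← hKnorm]
  refine integral_congr_ae ?_
  filter_upwards [compl_mem_ae_iff.2 (measure_singleton t)] with s hs
  have hs' : s ≠ t := hs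
  unfold heaviside
  rcases lt_or_gt_of_ne hs' with h | h
  · simp [h, h.le]
  · simp [h, h.le]

lemma convK_heaviside_eq_zero (hKsupp : Function.support K ⊆ Icc (-κ) κ) {t : ℝ} (ht : t < -κ) :
    convK K heaviside t = 0 := by
  unfold convK
  refine integral_eq_zero_of_ae (ae_of_all _ fun s => ?_)
  by_cases hs : K s = 0
  · simp [hs]
  · have := hKsupp hs
    simp [heaviside, show ¬ s < t by linarith [this.1]]

lemma convK_heaviside_eq_one (hKnorm : (∫ x, K x) = 1)
    (hKsupp : Function.support K ⊆ Icc (-κ) κ) {t : ℝ} (ht : κ < t) :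
    convK K heaviside t = 1 := by
  unfold convK
  rw [← hKnorm]
  refine integral_congr_ae (ae_of_all _ fun s => ?_)
  by_cases hs : K s = 0
  · simp [hs]
  · have := hKsupp hs
    simp [heaviside, show s < t by linarith [this.2]]

lemma convK_heaviside_eq (hKnorm : (∫ x, K x) = 1)
    (hKsupp : Function.support K ⊆ Icc (-κ) κ) (hκ : 0 < κ) {t : ℝ} (ht : κ < |t|) :
    convK K heaviside t = heaviside t := by
  rcases lt_abs.1 ht with h | h
  · rw [convK_heaviside_eq_one hKnorm hKsupp h, heaviside, if_pos (hκ.trans h)]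
  · rw [convK_heaviside_eq_zero hKsupp (by linarith), heaviside, if_neg (by linarith)]

lemma convK_stepOn {n : ℕ} {j : Fin n → ℝ} {α : Fin (n + 1) → ℝ} (hj : StrictMono j)
    (hKint : Integrable K) (hKnorm : (∫ x, K x) = 1) (t : ℝ) :
    convK K (stepOn j α) t =
      α 0 + ∑ i : Fin n, (α i.succ - α i.castSucc) * convK K heaviside (t - j i) := by
  have h : ∀ i : Fin n, Integrable fun s =>
      (α i.succ - α i.castSucc) * (K s * heaviside (t - j i - s)) :=
    fun i => (integrable_mul_heaviside hKint _).const_mul _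
  have e : ∀ s, K s * stepOn j α (t - s) = K s * α 0 +
      ∑ i : Fin n, (α i.succ - α i.castSucc) * (K s * heaviside (t - j i - s)) := by
    intro s
    rw [stepOn_eq_sum hj, mul_add, Finset.mul_sum]
    congr 1
    refine Finset.sum_congr rfl fun i _ => ?_
    rw [show t - s - j i = t - j i - s by ring]
    ring
  unfold convK
  simp_rw [e]
  rw [integral_add (hKint.mul_const _) (integrable_finsetSum _ fun i _ => h i),
    integral_finsetSum _ fun i _ => h i, integral_mul_const, hKnorm, one_mul]
  simp_rw [integral_const_mul]

lemma integrableOn_of_measurable_of_bounded {u : ℝ → ℝ} {p q C : ℝ} (hu : Measurable u)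
    (hC : ∀ t, |u t| ≤ C) : IntegrableOn u (Icc p q) :=
  Measure.integrableOn_of_bounded (M := C) (by simp) hu.aestronglyMeasurable (ae_of_all _ hC)

lemma measurable_stepOn {n : ℕ} {j : Fin n → ℝ} {α : Fin (n + 1) → ℝ} (hj : StrictMono j) :
    Measurable (stepOn j α) := by
  rw [funext (stepOn_eq_sum hj)]
  exact measurable_const.add (Finset.measurable_fun_sum _ fun i _ =>
    (measurable_heaviside.comp (measurable_id.sub_const _)).const_mul _)

lemma integrableOn_stepOn {n : ℕ} {j : Fin n → ℝ} {α : Fin (n + 1) → ℝ} (hj : StrictMono j)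
    (p q : ℝ) : IntegrableOn (stepOn j α) (Icc p q) :=
  integrableOn_of_measurable_of_bounded (C := ∑ k, |α k|) (measurable_stepOn hj) fun _ =>
    Finset.single_le_sum (f := fun k => |α k|) (fun _ _ => abs_nonneg _) (Finset.mem_univ _)

lemma integrableOn_convK_stepOn {n : ℕ} {j : Fin n → ℝ} {α : Fin (n + 1) → ℝ}
    (hj : StrictMono j) (hKint : Integrable K) (hKpos : ∀ x, 0 ≤ K x)
    (hKnorm : (∫ x, K x) = 1) (p q : ℝ) : IntegrableOn (convK K (stepOn j α)) (Icc p q) := by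
  rw [funext (convK_stepOn hj hKint hKnorm)]
  refine Integrable.add (integrable_const _) (integrable_finsetSum _ fun i _ => ?_)
  refine Integrable.const_mul ?_ _
  refine integrableOn_of_measurable_of_bounded (C := 1)
    ((convK_heaviside_mono hKint hKpos).measurable.comp (measurable_id.sub_const _)) fun t => ?_
  rw [abs_of_nonneg (convK_heaviside_nonneg hKpos _)]
  exact convK_heaviside_le_one hKint hKpos hKnorm _

end Convolution

section Jumps

variable {n : ℕ} {j : Fin (n + 1) → ℝ}

lemma jext_succ_castSucc (i : Fin (n + 1)) : jext j i.succ.castSucc = j i := by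
  rw [← Fin.succ_castSucc, jext, Fin.cons_succ, Fin.snoc_castSucc]

lemma jext_last : jext j (Fin.last (n + 2)) = 1 := by
  rw [← Fin.succ_last, jext, Fin.cons_succ, Fin.snoc_last]

lemma lmin_le (i : Fin (n + 2)) : lmin j ≤ jext j i.succ - jext j i.castSucc :=
  Finset.inf'_le (fun i : Fin (n + 2) => jext j i.succ - jext j i.castSucc) (Finset.mem_univ i)

lemma jext_strictMono (hl : 0 < lmin j) : StrictMono (jext j) :=
  Fin.strictMono_iff_lt_succ.2 fun i => by linarith [lmin_le (j := j) i]

lemma lmin_le_of_lt (hl : 0 < lmin j) {k l : Fin (n + 3)} (hkl : k < l) :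
    lmin j ≤ jext j l - jext j k := by
  have hk : k ≠ Fin.last _ := (hkl.trans_le (Fin.le_last l)).ne
  obtain ⟨k, rfl⟩ := Fin.exists_castSucc_eq.2 hk
  have := (jext_strictMono hl).monotone (Fin.castSucc_lt_iff_succ_le.1 hkl)
  linarith [lmin_le (j := j) k]

lemma lmin_le_sub (hl : 0 < lmin j) {k l : Fin (n + 1)} (hkl : k < l) :
    lmin j ≤ j l - j k := by
  have := lmin_le_of_lt hl (k := k.succ.castSucc) (l := l.succ.castSucc) (by simpa using hkl)
  rwa [jext_succ_castSucc, jext_succ_castSucc] at this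

lemma lmin_le_apply (hl : 0 < lmin j) (i : Fin (n + 1)) : lmin j ≤ j i := by
  have := lmin_le_of_lt hl (k := 0) (l := i.succ.castSucc) (by simp [Fin.lt_def])
  rw [jext_succ_castSucc] at this
  simpa [jext] using this

lemma lmin_le_one_sub (hl : 0 < lmin j) (i : Fin (n + 1)) : lmin j ≤ 1 - j i := by
  have := lmin_le_of_lt hl (k := i.succ.castSucc) (l := Fin.last _) (Fin.castSucc_lt_last _)
  rwa [jext_succ_castSucc, jext_last] at this

lemma isPCRep_stepOn {α : Fin (n + 2) → ℝ} (hj : StrictMono j) (hl : 0 < lmin j) :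
    IsPCRep (stepOn j α) (jext j) α := by
  have hmono := jext_strictMono hl
  refine ⟨hmono, rfl, jext_last, ?_⟩
  have hnull : volume (range (jext j)) = 0 := (finite_range _).measure_zero _
  unfold mu01
  filter_upwards [ae_restrict_mem measurableSet_Icc,
    ae_restrict_of_ae (compl_mem_ae_iff.2 hnull)] with t ht hne
  have hne' : ∀ k, jext j k ≠ t := fun k hk => hne ⟨k, hk⟩
  obtain ⟨l, hl1, hl2⟩ := exists_mem_Ico_castSucc_succ (x := jext j) (t := t) ht.1
    (lt_of_le_of_ne (jext_last.symm ▸ ht.2) (hne' _).symm)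
  rw [stepF_eq_of_mem hmono ⟨lt_of_le_of_ne hl1 (hne' _), hl2⟩]
  refine stepOn_eq_of_iff hj fun i => ?_
  rw [← jext_succ_castSucc (j := j) i]
  constructor
  · intro h
    by_contra! hle
    have : jext j l.succ ≤ jext j i.succ.castSucc := hmono.monotone (by
      rw [Fin.le_def]; simpa using hle)
    linarith
  · intro h
    have : jext j i.succ.castSucc ≤ jext j l.castSucc := hmono.monotone (by
      rw [Fin.le_def]; simpa using h)
    exact (this.trans hl1).lt_of_ne (hne' _)

end Jumps

section Transitions

variable {n : ℕ} {j : Fin (n + 1) → ℝ} {α : Fin (n + 2) → ℝ} {K : ℝ → ℝ} {κ : ℝ}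

lemma half_lmin_lt_abs_sub (hl : 0 < lmin j) {i k : Fin (n + 1)} (hki : k ≠ i) {t : ℝ}
    (ht : t ∈ Ioo (j i - lmin j / 2) (j i + lmin j / 2)) : lmin j / 2 < |t - j k| := by
  rcases lt_or_gt_of_ne hki with h | h
  · exact lt_abs.2 (Or.inl (by linarith [lmin_le_sub hl h, ht.1]))
  · exact lt_abs.2 (Or.inr (by linarith [lmin_le_sub hl h, ht.2]))

lemma stepOn_of_le_jump (hj : StrictMono j) (hl : 0 < lmin j) {i : Fin (n + 1)} {t : ℝ}
    (ht : j i - lmin j / 2 < t) (hti : t ≤ j i) : stepOn j α t = α i.castSucc := by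
  refine stepOn_eq_of_iff hj fun k => ⟨fun h => ?_, fun h => ?_⟩
  · exact hj.lt_iff_lt.1 (h.trans_le hti)
  · linarith [lmin_le_sub hl (show k < i from h)]

lemma stepOn_of_jump_lt (hj : StrictMono j) (hl : 0 < lmin j) {i : Fin (n + 1)} {t : ℝ}
    (ht : t < j i + lmin j / 2) (hti : j i < t) : stepOn j α t = α i.succ := by
  refine stepOn_eq_of_iff hj fun k => ⟨fun h => ?_, fun h => ?_⟩
  · by_contra! hle
    have : i < k := by rw [Fin.lt_def]; simpa [Nat.succ_le_iff] using hle
    linarith [lmin_le_sub hl this]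
  · have : k ≤ i := by rw [Fin.le_def]; simpa [Nat.lt_succ_iff] using h
    exact (hj.monotone this).trans_lt hti

lemma convK_stepOn_eq_stepOn (hj : StrictMono j) (hKint : Integrable K)
    (hKnorm : (∫ x, K x) = 1) (hKsupp : Function.support K ⊆ Icc (-κ) κ) (hκ : 0 < κ) {t : ℝ}
    (ht : ∀ k, κ < |t - j k|) : convK K (stepOn j α) t = stepOn j α t := by
  rw [convK_stepOn hj hKint hKnorm, stepOn_eq_sum hj]
  simp_rw [fun k => convK_heaviside_eq hKnorm hKsupp hκ (ht k)]

lemma convK_stepOn_eq_near (hj : StrictMono j) (hKint : Integrable K)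
    (hKnorm : (∫ x, K x) = 1) (hKsupp : Function.support K ⊆ Icc (-κ) κ) (hκ : 0 < κ)
    (hκl : κ ≤ lmin j / 6) {i : Fin (n + 1)} {t : ℝ}
    (ht : t ∈ Ioo (j i - lmin j / 2) (j i + lmin j / 2)) :
    convK K (stepOn j α) t =
      α i.castSucc + (α i.succ - α i.castSucc) * convK K heaviside (t - j i) := by
  have hl : 0 < lmin j := by linarith
  have hsub : convK K (stepOn j α) t - stepOn j α t =
      (α i.succ - α i.castSucc) * (convK K heaviside (t - j i) - heaviside (t - j i)) := by
    rw [convK_stepOn hj hKint hKnorm, stepOn_eq_sum hj, add_sub_add_left_eq_sub,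
      ← Finset.sum_sub_distrib, Finset.sum_eq_single i]
    · ring
    · intro k _ hk
      rw [convK_heaviside_eq hKnorm hKsupp hκ
        (by linarith [half_lmin_lt_abs_sub hl hk ht]), sub_self]
    · simp
  rcases le_or_gt t (j i) with h | h
  · rw [stepOn_of_le_jump hj hl ht.1 h, heaviside, if_neg (by linarith)] at hsub
    linarith
  · rw [stepOn_of_jump_lt hj hl ht.2 h, heaviside, if_pos (by linarith)] at hsub
    linarith

lemma isTransition_convK_stepOn (hj : StrictMono j) (hKint : Integrable K)
    (hKpos : ∀ x, 0 ≤ K x) (hKsym : ∀ x, K (-x) = K x) (hKnorm : (∫ x, K x) = 1)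
    (hKsupp : Function.support K ⊆ Icc (-κ) κ) (hκ : 0 < κ) (hκl : κ ≤ lmin j / 6)
    (i : Fin (n + 1)) :
    IsTransition (convK K (stepOn j α)) (stepOn j α) (j i) κ (lmin j / 2)
      (α i.castSucc) (α i.succ) := by
  have hl : 0 < lmin j := by linarith
  have hf : ∀ t ∈ Ioo (j i - lmin j / 2) (j i + lmin j / 2), convK K (stepOn j α) t =
      α i.castSucc + (α i.succ - α i.castSucc) * convK K heaviside (t - j i) :=
    fun t ht => convK_stepOn_eq_near hj hKint hKnorm hKsupp hκ hκl ht
  have near : ∀ t ∈ Ioo (j i - κ) (j i + κ),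
      |stepOn j α t - convK K (stepOn j α) t| ≤ |convK K (stepOn j α) t - α i.castSucc| ∧
      |stepOn j α t - convK K (stepOn j α) t| ≤ |convK K (stepOn j α) t - α i.succ| ∧
      |stepOn j α t - convK K (stepOn j α) t| ≤ |α i.succ - α i.castSucc| / 2 := by
    intro t ht
    have ht' : t ∈ Ioo (j i - lmin j / 2) (j i + lmin j / 2) :=
      ⟨by linarith [ht.1], by linarith [ht.2]⟩
    have hsum := convK_heaviside_add_neg hKint hKsym hKnorm (t - j i)
    have hmono := convK_heaviside_mono hKint hKpos
    have h0 := convK_heaviside_nonneg hKpos (t - j i)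
    have h1 := convK_heaviside_le_one hKint hKpos hKnorm (t - j i)
    rw [hf t ht']
    set F := convK K heaviside (t - j i)
    set D := α i.succ - α i.castSucc with hD
    have eA : |α i.castSucc + D * F - α i.castSucc| = |D| * F := by
      rw [add_sub_cancel_left, abs_mul, abs_of_nonneg h0]
    have eB : |α i.castSucc + D * F - α i.succ| = |D| * (1 - F) := by
      rw [show α i.castSucc + D * F - α i.succ = -(D * (1 - F)) by rw [hD]; ring,
        abs_neg, abs_mul, abs_of_nonneg (by linarith : 0 ≤ 1 - F)]
    have hDnn := abs_nonneg D
    rcases le_or_gt t (j i) with h | h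
    · have hF : F ≤ 1 / 2 := by
        linarith [hmono (show t - j i ≤ -(t - j i) by linarith)]
      rw [stepOn_of_le_jump hj hl ht'.1 h, abs_sub_comm (α i.castSucc), eA, eB]
      exact ⟨le_rfl, by nlinarith, by nlinarith⟩
    · have hF : 1 / 2 ≤ F := by
        linarith [hmono (show -(t - j i) ≤ t - j i by linarith)]
      rw [stepOn_of_jump_lt hj hl ht'.2 h, abs_sub_comm (α i.succ), eA, eB]
      exact ⟨by nlinarith, le_rfl, by nlinarith⟩
  refine ⟨hκ, by linarith, fun t ht => ?_, fun t ht => ?_, fun t ht => (near t ht).1,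
    fun t ht => (near t ht).2.1, fun t ht => (near t ht).2.2,
    integrableOn_convK_stepOn hj hKint hKpos hKnorm _ _, integrableOn_stepOn hj _ _⟩
  · refine ⟨?_, stepOn_of_le_jump hj hl ht.1 (by linarith [ht.2])⟩
    rw [hf t ⟨ht.1, by linarith [ht.2]⟩,
      convK_heaviside_eq_zero hKsupp (by linarith [ht.2]), mul_zero, add_zero]
  · refine ⟨?_, stepOn_of_jump_lt hj hl ht.2 (by linarith [ht.1])⟩
    rw [hf t ⟨by linarith [ht.1], ht.2⟩,
      convK_heaviside_eq_one hKnorm hKsupp (by linarith [ht.1])]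
    ring

end Transitions

/-- On the window around one transition, the Potts energy of a step function (counting the
partition points in the window) is at least that of the sharp jump. -/
lemma IsTransition.potts_le {f g : ℝ → ℝ} {p κ r A B γ : ℝ} (h : IsTransition f g p κ r A B)
    {J : ℕ} {x : Fin (J + 2) → ℝ} {a : Fin (J + 1) → ℝ} (hx : StrictMono x) (hx0 : x 0 = 0)
    (hx1 : x (Fin.last (J + 1)) = 1) (hp0 : 0 ≤ p - r) (hp1 : p + r ≤ 1)
    (hγ : κ * |B - A| ≤ γ) (hγ' : γ + κ * |B - A| ≤ (r - κ) * |B - A|) :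
    γ + ∫ t in (p - r)..(p + r), |g t - f t| ≤
      γ * ((Finset.univ.filter fun l : Fin J =>
        x l.succ.castSucc ∈ Ioo (p - r) (p + r)).card : ℝ) +
      ∫ t in (p - r)..(p + r), |stepF x a t - f t| := by
  have h0 := h.pos
  have h3 := h.three_mul_le
  have hself := h.integral_self_le_mul
  have hγ0 : 0 ≤ γ := (mul_nonneg h0.le (abs_nonneg _)).trans hγ
  have hv : IntegrableOn (stepF x a) (Icc (p - r) (p + r)) := integrable_stepF.integrableOn
  set S := Finset.univ.filter fun l : Fin J => x l.succ.castSucc ∈ Ioo (p - r) (p + r) with hS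
  have hmem : ∀ k, x k ∈ Ioo (p - r) (p + r) → ∃ l ∈ S, k = l.succ.castSucc := by
    intro k hk
    have hk1 : k ≠ Fin.last (J + 1) := by
      rintro rfl
      linarith [hk.2]
    obtain ⟨k, rfl⟩ := Fin.exists_castSucc_eq.2 hk1
    have hk0 : k ≠ 0 := by
      rintro rfl
      rw [Fin.castSucc_zero] at hk
      linarith [hk.1]
    obtain ⟨l, rfl⟩ := Fin.exists_succ_eq.2 hk0
    exact ⟨l, by simpa [hS] using hk, rfl⟩
  have hcases : S.card = 0 ∨ S.card = 1 ∨ 2 ≤ S.card := by omega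
  rcases hcases with hc | hc | hc
  · obtain ⟨c, hcst⟩ := exists_stepF_eq_const (a := a) (p := p - r) (q := p + r) hx
      (by linarith) (by linarith) (fun k hk => by
        obtain ⟨l, hl, -⟩ := hmem k hk
        simp [Finset.card_eq_zero.1 hc] at hl)
    have := h.le_integral_of_const hv hcst
    rw [hc]
    push_cast
    linarith
  · obtain ⟨l, hl⟩ := Finset.card_eq_one.1 hc
    have hy : x l.succ.castSucc ∈ Ioo (p - r) (p + r) := by
      have : l ∈ S := by simp [hl]
      simpa [hS] using this
    have huniq : ∀ k, x k ∈ Ioo (p - r) (p + r) → x k = x l.succ.castSucc := by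
      intro k hk
      obtain ⟨l', hl', rfl⟩ := hmem k hk
      rw [hl, Finset.mem_singleton] at hl'
      rw [hl']
    obtain ⟨c, hcst⟩ := exists_stepF_eq_const (a := a) (p := p - r) (q := x l.succ.castSucc) hx
      (by linarith) (by linarith) (fun k hk => by
        have := huniq k ⟨hk.1, hk.2.trans hy.2⟩
        linarith [hk.2])
    obtain ⟨d, hdst⟩ := exists_stepF_eq_const (a := a) (p := x l.succ.castSucc) (q := p + r) hx
      (by linarith [hy.1]) (by linarith [hy.2]) (fun k hk => by
        have := huniq k ⟨hy.1.trans hk.1, hk.2⟩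
        linarith [hk.1])
    have := h.integral_self_le_of_one_jump hv hcst hdst
    rw [hc]
    push_cast
    linarith
  · have hnn : 0 ≤ ∫ t in (p - r)..(p + r), |stepF x a t - f t| :=
      intervalIntegral.integral_nonneg (by linarith) fun t _ => abs_nonneg _
    have hc' : (2 : ℝ) ≤ S.card := by exact_mod_cast hc
    nlinarith

/-- The numbers of points in pairwise disjoint sets sum to at most the number of points. -/
lemma sum_card_filter_le {ι : Type*} [Fintype ι] {J : ℕ} {y : Fin J → ℝ} {E : ι → Set ℝ}
    [∀ i, DecidablePred fun l => y l ∈ E i] (hE : Pairwise (Function.onFun Disjoint E)) :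
    ∑ i, (Finset.univ.filter fun l => y l ∈ E i).card ≤ J := by
  rw [← Finset.card_biUnion]
  · exact (Finset.card_le_univ _).trans (by simp)
  · intro i _ k _ hik
    rw [Function.onFun, Finset.disjoint_left]
    intro l hl hl'
    simp only [Finset.mem_filter, Finset.mem_univ, true_and] at hl hl'
    exact Set.disjoint_left.1 (hE hik) hl hl'

lemma exists_isPCRep_jumps {u : ℝ → ℝ} (hu : IsPC u) :
    ∃ (x : Fin (jumps u + 2) → ℝ) (a : Fin (jumps u + 1) → ℝ), IsPCRep u x a := by
  refine Nat.sInf_mem (s := {jj : ℕ | ∃ (x : Fin (jj + 2) → ℝ) (a : Fin (jj + 1) → ℝ),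
    IsPCRep u x a}) ?_
  obtain ⟨m, x, a, h⟩ := hu
  cases m with
  | zero =>
    have h01 : (0 : ℝ) = 1 := h.2.1.symm.trans h.2.2.1
    norm_num at h01
  | succ m => exact ⟨m, x, a, h⟩

theorem statement_15
    (n : ℕ) (j : Fin (n + 1) → ℝ) (α : Fin (n + 2) → ℝ)
    (hj : StrictMono j) (hj0 : 0 < j 0) (hj1 : j (Fin.last n) < 1)
    (hadj : ∀ i : Fin (n + 1), α i.castSucc ≠ α i.succ)
    (K : ℝ → ℝ) (κ : ℝ) (hκ : 0 < κ)
    (hKint : Integrable K) (hKpos : ∀ x, 0 ≤ K x)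
    (hKsym : ∀ x, K (-x) = K x) (hKnorm : (∫ x, K x) = 1)
    (hKsupp : Function.support K ⊆ Set.Icc (-κ) κ)
    (hκl : κ ≤ lmin j / 6)
    (γ : ℝ) (hγ : 0 < γ)
    (hcond : 6 * hjumpMax α * κ ≤ (1 / 2) * hjumpMin α * (lmin j - 2 * κ) - γ)
    (hcond2 : 2 * κ * hjumpMax α ≤ γ)
    (u₂ : ℝ → ℝ) (hu₂ : IsPC u₂) :
    -- there is `u₃` with smaller Potts value having no jump in `∪ᵢ Nᵢ` and exactly one
    -- jump in each `Jᵢ`: it has a minimal representation whose `n+1` interior partition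
    -- points `x_{i+1}` satisfy `x_{i+1} ∈ Jᵢ`
    ∃ (u₃ : ℝ → ℝ) (x : Fin (n + 3) → ℝ) (a : Fin (n + 2) → ℝ),
      IsPCRep u₃ x a ∧ (∀ ii : Fin (n + 1), a ii.castSucc ≠ a ii.succ) ∧
      (∀ i : Fin (n + 1), x i.succ.castSucc ∈ Set.Icc (j i - κ) (j i + κ)) ∧
      PottsVal γ (convK K (stepOn j α)) u₃ ≤ PottsVal γ (convK K (stepOn j α)) u₂ := by
  have hl : 0 < lmin j := by linarith
  set f := convK K (stepOn j α) with hf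
  set g := stepOn j α
  have hrep : IsPCRep g (jext j) α := isPCRep_stepOn hj hl
  refine ⟨g, jext j, α, hrep, hadj, fun i => ?_, ?_⟩
  · rw [jext_succ_castSucc]
    exact ⟨by linarith, by linarith⟩
  have hjumps : jumps g ≤ n + 1 := Nat.sInf_le ⟨jext j, α, hrep⟩
  obtain ⟨x, a, hx, hx0, hx1, hae⟩ := exists_isPCRep_jumps hu₂
  have htr : ∀ i, IsTransition f g (j i) κ (lmin j / 2) (α i.castSucc) (α i.succ) :=
    isTransition_convK_stepOn hj hKint hKpos hKsym hKnorm hKsupp hκ hκl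
  set E : Fin (n + 1) → Set ℝ := fun i => Ioo (j i - lmin j / 2) (j i + lmin j / 2)
  have hdisj : Pairwise (Function.onFun Disjoint E) := by
    intro i k hik
    rw [Function.onFun, Set.disjoint_left]
    intro t ht ht'
    have := half_lmin_lt_abs_sub hl hik.symm ht
    exact absurd this (not_lt.2 (abs_le.2 ⟨by linarith [ht'.1], by linarith [ht'.2]⟩))
  have hsub : (⋃ i, E i) ⊆ Icc (0 : ℝ) 1 := by
    refine iUnion_subset fun i t ht => ⟨?_, ?_⟩
    · linarith [ht.1, lmin_le_apply hl i]
    · linarith [ht.2, lmin_le_one_sub hl i]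
  have hfint : IntegrableOn f (Icc 0 1) := integrableOn_convK_stepOn hj hKint hKpos hKnorm _ _
  have hsum : ∀ v : ℝ → ℝ, IntegrableOn v (Icc 0 1) → ∫ t in ⋃ i, E i, |v t - f t| =
      ∑ i, ∫ t in (j i - lmin j / 2)..(j i + lmin j / 2), |v t - f t| := by
    intro v hv
    have habs : IntegrableOn (fun t => |v t - f t|) (Icc 0 1) := Integrable.abs (hv.sub hfint)
    rw [integral_iUnion_fintype (s := E) (fun i => measurableSet_Ioo) hdisj fun i =>
      habs.mono_set ((subset_iUnion E i).trans hsub)]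
    refine Finset.sum_congr rfl fun i _ => ?_
    rw [intervalIntegral.integral_of_le (by linarith), integral_Ioc_eq_integral_Ioo]
  have hL1g : L1dist g f =
      ∑ i, ∫ t in (j i - lmin j / 2)..(j i + lmin j / 2), |g t - f t| := by
    rw [← hsum g (integrableOn_stepOn hj _ _), L1dist, mu01]
    refine setIntegral_eq_of_subset_of_forall_sdiff_eq_zero measurableSet_Icc hsub ?_
    intro t ht
    rw [hf, convK_stepOn_eq_stepOn hj hKint hKnorm hKsupp hκ, sub_self, abs_zero]
    intro k
    by_contra! hle
    obtain ⟨h1, h2⟩ := abs_le.1 hle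
    exact ht.2 (mem_iUnion.2 ⟨k, by linarith, by linarith⟩)
  have hL1u : ∑ i, ∫ t in (j i - lmin j / 2)..(j i + lmin j / 2), |stepF x a t - f t| ≤
      L1dist u₂ f := by
    have hvint : IntegrableOn (stepF x a) (Icc 0 1) := integrable_stepF.integrableOn
    have : L1dist u₂ f = ∫ t in Icc (0 : ℝ) 1, |stepF x a t - f t| :=
      integral_congr_ae (hae.mono fun t ht => by simp only [ht])
    rw [this, ← hsum _ hvint]
    exact setIntegral_mono_set (Integrable.abs (hvint.sub hfint))
      (ae_of_all _ fun t => abs_nonneg _) (ae_of_all _ hsub)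
  have hlocal : ∀ i, γ + ∫ t in (j i - lmin j / 2)..(j i + lmin j / 2), |g t - f t| ≤
      γ * ((Finset.univ.filter fun l : Fin (jumps u₂) => x l.succ.castSucc ∈ E i).card : ℝ) +
      ∫ t in (j i - lmin j / 2)..(j i + lmin j / 2), |stepF x a t - f t| := by
    intro i
    have hmax : |α i.succ - α i.castSucc| ≤ hjumpMax α :=
      Finset.le_sup' (fun i : Fin (n + 1) => |α i.succ - α i.castSucc|) (Finset.mem_univ i)
    have hmin : hjumpMin α ≤ |α i.succ - α i.castSucc| :=
      Finset.inf'_le (fun i : Fin (n + 1) => |α i.succ - α i.castSucc|) (Finset.mem_univ i)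
    have hnn := abs_nonneg (α i.succ - α i.castSucc)
    have hκmax : κ * |α i.succ - α i.castSucc| ≤ κ * hjumpMax α :=
      mul_le_mul_of_nonneg_left hmax hκ.le
    have hκnn : 0 ≤ κ * hjumpMax α := mul_nonneg hκ.le (hnn.trans hmax)
    have hminmul : hjumpMin α * (lmin j - 2 * κ) ≤
        |α i.succ - α i.castSucc| * (lmin j - 2 * κ) :=
      mul_le_mul_of_nonneg_right hmin (by linarith)
    exact (htr i).potts_le hx hx0 hx1 (by linarith [lmin_le_apply hl i])
      (by linarith [lmin_le_one_sub hl i]) (by linarith) (by linarith)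
  have htotal := Finset.sum_le_sum fun i (_ : i ∈ Finset.univ) => hlocal i
  rw [Finset.sum_add_distrib, Finset.sum_add_distrib, ← Finset.mul_sum, ← hL1g] at htotal
  simp only [Finset.sum_const, Finset.card_univ, Fintype.card_fin, nsmul_eq_mul] at htotal
  have hcount : (∑ i, ((Finset.univ.filter fun l : Fin (jumps u₂) =>
      x l.succ.castSucc ∈ E i).card : ℝ)) ≤ jumps u₂ := by
    exact_mod_cast sum_card_filter_le (y := fun l : Fin (jumps u₂) => x l.succ.castSucc) hdisj
  have hcount' := mul_le_mul_of_nonneg_left hcount hγ.le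
  have hjumps' : γ * (jumps g : ℝ) ≤ γ * ((n + 1 : ℕ) : ℝ) :=
    mul_le_mul_of_nonneg_left (by exact_mod_cast hjumps) hγ.le
  unfold PottsVal
  linarith
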